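/- arXiv:1209.4632 — 2 statements merged into one kernel-verified Lean document; each statement's English description precedes it below -/
import Mathlib

section
/- For every fixed n ∈ ℕ, the sequence D_m = C(m+n−1, n−1)^{1/(2m)} tends to 1 as m → ∞, and satisfies |P|_{2m/(m+1)} ≤ D_m ‖P‖ for every m-homogeneous polynomial P in n complex variables; hence the complex polynomial Bohnenblust–Hille inequality in fixed dimension n is contractive, i.e., there exist constants D_m with lim_{m→∞} D_m = 1 such that |P|_{2m/(m+1)} ≤ D_m‖P‖ for all such P. -/
open MvPolynomial Filter

/-- The sup norm of a real polynomial in `n` variables over the cube `[-1,1]^n`. -/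
noncomputable def supNorm {n : ℕ} (P : MvPolynomial (Fin n) ℝ) : ℝ :=
  sSup {y : ℝ | ∃ x : Fin n → ℝ, (∀ i, |x i| ≤ 1) ∧ y = |eval x P|}

/-- The sup norm of a complex polynomial in `n` variables over the closed polydisk `𝔻^n`. -/
noncomputable def supNormC {n : ℕ} (P : MvPolynomial (Fin n) ℂ) : ℝ :=
  sSup {y : ℝ | ∃ z : Fin n → ℂ, (∀ i, ‖z i‖ ≤ 1) ∧ y = ‖eval z P‖}

/-- The `ℓ_p` norm of the coefficients of a complex polynomial. -/
noncomputable def lpNormC {n : ℕ} (p : ℝ) (P : MvPolynomial (Fin n) ℂ) : ℝ :=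
  (∑ α ∈ P.support, ‖coeff α P‖ ^ p) ^ (1 / p)

/-!
On the torus the monomials are orthonormal, so by Parseval the `ℓ_2` norm of the coefficients of `P`
is the `L²` norm of `P` on the torus, which is at most the supremum norm. Hölder's inequality
replaces `ℓ_2` by `ℓ_p` at the cost of the factor `N ^ (1 / p - 1 / 2)`, where `N` is the number of
monomials; for `p = 2m / (m + 1)` the exponent is `1 / (2m)`. In a fixed number of variables `N`
grows polynomially in the degree `m`, so that factor tends to `1`.
-/

open Asymptotics MeasureTheory Topology

theorem rpow_sum_rpow_le_card_rpow_mul {ι : Type*} (s : Finset ι) {f : ι → ℝ} {p q : ℝ}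
    (hp : 0 < p) (hpq : p ≤ q) (hf : ∀ i ∈ s, 0 ≤ f i) :
    (∑ i ∈ s, f i ^ p) ^ (1 / p) ≤
      (s.card : ℝ) ^ (1 / p - 1 / q) * (∑ i ∈ s, f i ^ q) ^ (1 / q) := by
  have hq : 0 < q := hp.trans_le hpq
  have sum_nonneg (r : ℝ) : 0 ≤ ∑ i ∈ s, f i ^ r :=
    Finset.sum_nonneg fun i hi => Real.rpow_nonneg (hf i hi) r
  have power_mean : (∑ i ∈ s, f i ^ p) ^ (q / p) ≤
      (s.card : ℝ) ^ (q / p - 1) * ∑ i ∈ s, f i ^ q := by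
    have rpow_rpow : ∀ i ∈ s, (f i ^ p) ^ (q / p) = f i ^ q := fun i hi => by
      rw [← Real.rpow_mul (hf i hi), mul_div_cancel₀ q hp.ne']
    rw [← Finset.sum_congr rfl rpow_rpow]
    exact Real.rpow_sum_le_const_mul_sum_rpow_of_nonneg s ((one_le_div hp).mpr hpq)
      fun i hi => Real.rpow_nonneg (hf i hi) p
  calc (∑ i ∈ s, f i ^ p) ^ (1 / p)
      = ((∑ i ∈ s, f i ^ p) ^ (q / p)) ^ (1 / q) := by
        rw [← Real.rpow_mul (sum_nonneg p)]
        congr 1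
        field_simp
    _ ≤ ((s.card : ℝ) ^ (q / p - 1) * ∑ i ∈ s, f i ^ q) ^ (1 / q) := by
        have := sum_nonneg p
        gcongr
    _ = (s.card : ℝ) ^ (1 / p - 1 / q) * (∑ i ∈ s, f i ^ q) ^ (1 / q) := by
        rw [Real.mul_rpow (by positivity) (sum_nonneg q), ← Real.rpow_mul (by positivity)]
        congr 2
        field_simp

theorem tendsto_rpow_one_div_of_isLittleO_log {α : Type*} {l : Filter α} {u g : α → ℝ}
    (hu : ∀ᶠ x in l, 0 < u x) (hlog : (fun x => Real.log (u x)) =o[l] g) :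
    Tendsto (fun x => u x ^ (1 / g x)) l (𝓝 1) := by
  have hexp := (Real.continuous_exp.tendsto 0).comp hlog.tendsto_div_nhds_zero
  rw [Real.exp_zero] at hexp
  refine hexp.congr' (hu.mono fun x hx => ?_)
  simp only [Function.comp_apply, Real.rpow_def_of_pos hx, mul_one_div]

theorem isLittleO_log_choose (k : ℕ) :
    (fun N : ℕ => Real.log (N.choose k)) =o[atTop] fun N => (N : ℝ) := by
  have log_choose_isBigO :
      (fun N : ℕ => Real.log (N.choose k)) =O[atTop] fun N => Real.log N := by
    refine .of_bound k (eventually_atTop.mpr ⟨k, fun N hN => ?_⟩)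
    rw [Real.norm_of_nonneg (Real.log_natCast_nonneg _),
      Real.norm_of_nonneg (Real.log_natCast_nonneg _), ← Real.log_pow]
    exact Real.log_le_log (mod_cast Nat.choose_pos hN) (mod_cast Nat.choose_le_pow N k)
  exact log_choose_isBigO.trans_isLittleO
    (Real.isLittleO_log_id_atTop.comp_tendsto tendsto_natCast_atTop_atTop)

theorem tendsto_choose_add_pred_rpow_one_div (n : ℕ) :
    Tendsto (fun m : ℕ => (Nat.choose (m + n - 1) (n - 1) : ℝ) ^ (1 / (2 * (m : ℝ))))
      atTop (𝓝 1) := by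
  have tendsto_add_pred : Tendsto (fun m : ℕ => m + n - 1) atTop atTop :=
    tendsto_atTop_mono (fun m => by omega) (tendsto_sub_atTop_nat 1)
  have add_pred_isBigO : (fun m : ℕ => ((m + n - 1 : ℕ) : ℝ)) =O[atTop] fun m => 2 * (m : ℝ) := by
    refine .of_bound (1 : ℝ) (eventually_atTop.mpr ⟨n, fun m hm => ?_⟩)
    rw [Real.norm_natCast, Real.norm_of_nonneg (by positivity), one_mul]
    exact_mod_cast (by omega : m + n - 1 ≤ 2 * m)
  refine tendsto_rpow_one_div_of_isLittleO_log ?_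
    (((isLittleO_log_choose (n - 1)).comp_tendsto tendsto_add_pred).trans_isBigO add_pred_isBigO)
  filter_upwards [eventually_ge_atTop 1] with m hm
  exact_mod_cast Nat.choose_pos (by omega)

theorem card_support_le_multichoose_of_isHomogeneous {σ R : Type*} [Fintype σ] [CommSemiring R]
    {m : ℕ} {P : MvPolynomial σ R} (hP : P.IsHomogeneous m) :
    P.support.card ≤ (Fintype.card σ).multichoose m := by
  classical
  rw [← Finset.card_univ, ← Finset.card_finsuppAntidiag_nat_eq_multichoose]
  refine Finset.card_le_card fun α hα => Finset.mem_finsuppAntidiag.mpr ⟨?_, α.support.subset_univ⟩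
  rw [hP.degree_eq_sum_deg_support hα, Finset.sum_subset α.support.subset_univ (by simp)]

theorem multichoose_le_choose_add_pred (n m : ℕ) :
    n.multichoose m ≤ (m + n - 1).choose (n - 1) := by
  cases n with
  | zero => cases m <;> simp
  | succ n =>
    rw [Nat.multichoose_eq, Nat.add_right_comm, Nat.add_sub_cancel, add_comm n m,
      Nat.choose_symm_add]
    rfl

theorem norm_eval_le_sum_norm_coeff {σ R : Type*} [NormedCommRing R] [NormOneClass R]
    (P : MvPolynomial σ R) {z : σ → R} (hz : ∀ i, ‖z i‖ ≤ 1) :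
    ‖eval z P‖ ≤ ∑ α ∈ P.support, ‖coeff α P‖ := by
  rw [eval_eq]
  refine norm_sum_le_of_le _ fun α _ => ?_
  refine (norm_mul_le _ _).trans (mul_le_of_le_one_right (norm_nonneg _) ?_)
  refine (Finset.norm_prod_le _ _).trans (Finset.prod_le_one (fun _ _ => norm_nonneg _) ?_)
  exact fun i _ => (norm_pow_le _ _).trans (pow_le_one₀ (norm_nonneg _) (hz i))

theorem norm_toLp_le_norm {X E 𝕜 : Type*} [TopologicalSpace X] [CompactSpace X]
    [MeasurableSpace X] [BorelSpace X] [NormedAddCommGroup E] [SecondCountableTopologyEither X E]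
    [NormedField 𝕜] [NormedSpace 𝕜 E] (p : ENNReal) [Fact (1 ≤ p)]
    (μ : Measure X) [IsProbabilityMeasure μ] (f : C(X, E)) :
    ‖ContinuousMap.toLp p μ 𝕜 f‖ ≤ ‖f‖ := by
  have bound : ∀ᵐ x ∂μ, ‖ContinuousMap.toLp p μ 𝕜 f x‖ ≤ ‖f‖ := by
    filter_upwards [ContinuousMap.coeFn_toLp (p := p) (𝕜 := 𝕜) μ f] with x hx
    exact hx ▸ f.norm_coe_le_norm x
  simpa [measureUnivNNReal] using Lp.norm_le_of_ae_bound (norm_nonneg f) bound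

theorem norm_sum_smul_sq_of_orthonormal {ι 𝕜 E : Type*} [RCLike 𝕜] [NormedAddCommGroup E]
    [InnerProductSpace 𝕜 E] {v : ι → E} (hv : Orthonormal 𝕜 v) (s : Finset ι) (c : ι → 𝕜) :
    ‖∑ i ∈ s, c i • v i‖ ^ 2 = ∑ i ∈ s, ‖c i‖ ^ 2 := by
  have h := hv.inner_sum c c s
  rw [inner_self_eq_norm_sq_to_K] at h
  simp only [RCLike.conj_mul] at h
  exact_mod_cast h

section Torus

/-- The restriction of a complex polynomial to the torus, the distinguished boundary of the
polydisk, as a function of the angles divided by `2π`. It makes the Fourier analysis on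
`UnitAddTorus` available for polynomials. -/
noncomputable def torusRestrict {σ : Type*} [Fintype σ] (P : MvPolynomial σ ℂ) :
    C(UnitAddTorus σ, ℂ) where
  toFun x := eval (fun i => fourier 1 (x i)) P
  continuous_toFun := by
    simp only [eval_eq']
    fun_prop

theorem torusRestrict_eq_sum {σ : Type*} [Fintype σ] (P : MvPolynomial σ ℂ) :
    torusRestrict P =
      ∑ α ∈ P.support, coeff α P • UnitAddTorus.mFourier (fun i => (α i : ℤ)) := by
  ext x
  simp [torusRestrict, UnitAddTorus.mFourier, eval_eq', fourier_apply, AddCircle.toCircle_nsmul]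

theorem norm_torusRestrict_le {σ : Type*} [Fintype σ] {P : MvPolynomial σ ℂ} {C : ℝ}
    (hC : ∀ z : σ → ℂ, (∀ i, ‖z i‖ = 1) → ‖eval z P‖ ≤ C) : ‖torusRestrict P‖ ≤ C :=
  (ContinuousMap.norm_le_of_nonempty _).mpr fun x =>
    hC _ fun i => by rw [fourier_apply, Circle.norm_coe]

-- Mathlib's Fourier analysis on `UnitAddTorus` is about this measure, but keeps both instances
-- local.
noncomputable local instance : MeasureSpace UnitAddCircle := ⟨AddCircle.haarAddCircle⟩

local instance : IsProbabilityMeasure (volume : Measure UnitAddCircle) :=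
  inferInstanceAs (IsProbabilityMeasure AddCircle.haarAddCircle)

theorem norm_toLp_torusRestrict_sq {σ : Type*} [Fintype σ] (P : MvPolynomial σ ℂ) :
    ‖ContinuousMap.toLp (E := ℂ) 2 volume ℂ (torusRestrict P)‖ ^ 2 =
      ∑ α ∈ P.support, ‖coeff α P‖ ^ 2 := by
  have exponent_injective : Function.Injective fun (α : σ →₀ ℕ) i => (α i : ℤ) :=
    fun α β h => Finsupp.ext fun i => Nat.cast_injective (congrFun h i)
  rw [torusRestrict_eq_sum, map_sum]
  simp only [map_smul]
  exact norm_sum_smul_sq_of_orthonormal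
    (UnitAddTorus.orthonormal_mFourier.comp _ exponent_injective) P.support fun α => coeff α P

theorem sum_norm_coeff_sq_le {σ : Type*} [Finite σ] {P : MvPolynomial σ ℂ} {C : ℝ}
    (hC : ∀ z : σ → ℂ, (∀ i, ‖z i‖ = 1) → ‖eval z P‖ ≤ C) :
    ∑ α ∈ P.support, ‖coeff α P‖ ^ 2 ≤ C ^ 2 := by
  have := Fintype.ofFinite σ
  rw [← norm_toLp_torusRestrict_sq]
  gcongr
  exact (norm_toLp_le_norm 2 volume _).trans (norm_torusRestrict_le hC)

end Torus

section PolydiskNorms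

variable {n : ℕ}

theorem norm_eval_le_supNormC (P : MvPolynomial (Fin n) ℂ) {z : Fin n → ℂ}
    (hz : ∀ i, ‖z i‖ ≤ 1) : ‖eval z P‖ ≤ supNormC P := by
  refine le_csSup ⟨∑ α ∈ P.support, ‖coeff α P‖, ?_⟩ ⟨z, hz, rfl⟩
  rintro _ ⟨w, hw, rfl⟩
  exact norm_eval_le_sum_norm_coeff P hw

theorem supNormC_nonneg (P : MvPolynomial (Fin n) ℂ) : 0 ≤ supNormC P :=
  (norm_nonneg _).trans (norm_eval_le_supNormC P (z := 0) (by simp))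

theorem lpNormC_two_le_supNormC (P : MvPolynomial (Fin n) ℂ) : lpNormC 2 P ≤ supNormC P := by
  have sum_sq_le : ∑ α ∈ P.support, ‖coeff α P‖ ^ 2 ≤ supNormC P ^ 2 :=
    sum_norm_coeff_sq_le fun z hz => norm_eval_le_supNormC P fun i => (hz i).le
  simpa only [lpNormC, Real.rpow_two, ← Real.sqrt_eq_rpow] using
    (Real.sqrt_le_left (supNormC_nonneg P)).mpr sum_sq_le

theorem lpNormC_le_card_support_rpow_mul_lpNormC {p q : ℝ} (hp : 0 < p) (hpq : p ≤ q)
    (P : MvPolynomial (Fin n) ℂ) :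
    lpNormC p P ≤ (P.support.card : ℝ) ^ (1 / p - 1 / q) * lpNormC q P :=
  rpow_sum_rpow_le_card_rpow_mul P.support hp hpq fun _ _ => norm_nonneg _

theorem lpNormC_le_choose_rpow_mul_supNormC {p : ℝ} (hp : 0 < p) (hp2 : p ≤ 2) {m : ℕ}
    {P : MvPolynomial (Fin n) ℂ} (hP : P.IsHomogeneous m) :
    lpNormC p P ≤ (Nat.choose (m + n - 1) (n - 1) : ℝ) ^ (1 / p - 1 / 2) * supNormC P := by
  have card_le : P.support.card ≤ Nat.choose (m + n - 1) (n - 1) := by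
    simpa only [Fintype.card_fin] using (card_support_le_multichoose_of_isHomogeneous hP).trans
      (multichoose_le_choose_add_pred _ m)
  have exponent_nonneg : 0 ≤ 1 / p - 1 / 2 := sub_nonneg.mpr (one_div_le_one_div_of_le hp hp2)
  calc lpNormC p P
      ≤ (P.support.card : ℝ) ^ (1 / p - 1 / 2) * lpNormC 2 P :=
        lpNormC_le_card_support_rpow_mul_lpNormC hp hp2 P
    _ ≤ (P.support.card : ℝ) ^ (1 / p - 1 / 2) * supNormC P := by
        gcongr
        exact lpNormC_two_le_supNormC P
    _ ≤ (Nat.choose (m + n - 1) (n - 1) : ℝ) ^ (1 / p - 1 / 2) * supNormC P := by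
        have := supNormC_nonneg P
        gcongr

end PolydiskNorms

/-- For every fixed `n ∈ ℕ`, the constants `D_m = C(m+n-1, n-1)^{1/(2m)}` tend to `1` and
satisfy `|P|_{2m/(m+1)} ≤ D_m ‖P‖` for every `m`-homogeneous polynomial `P` in `n` complex
variables; hence the complex polynomial Bohnenblust–Hille inequality in fixed dimension
`n` is contractive: there exist constants `D_m → 1` with `|P|_{2m/(m+1)} ≤ D_m ‖P‖`. -/
theorem complex_BH_contractive (n : ℕ) :
    Tendsto (fun m : ℕ => (Nat.choose (m + n - 1) (n - 1) : ℝ) ^ (1 / (2 * (m : ℝ))))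
      atTop (nhds 1) ∧
    (∀ m : ℕ, 0 < m → ∀ P : MvPolynomial (Fin n) ℂ, P.IsHomogeneous m →
      lpNormC (2 * m / (m + 1)) P ≤
        (Nat.choose (m + n - 1) (n - 1) : ℝ) ^ (1 / (2 * (m : ℝ))) * supNormC P) ∧
    ∃ D : ℕ → ℝ, Tendsto D atTop (nhds 1) ∧
      ∀ m : ℕ, 0 < m → ∀ P : MvPolynomial (Fin n) ℂ, P.IsHomogeneous m →
        lpNormC (2 * m / (m + 1)) P ≤ D m * supNormC P := by
  have bound (m : ℕ) (hm : 0 < m) (P : MvPolynomial (Fin n) ℂ) (hP : P.IsHomogeneous m) :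
      lpNormC (2 * m / (m + 1)) P ≤
        (Nat.choose (m + n - 1) (n - 1) : ℝ) ^ (1 / (2 * (m : ℝ))) * supNormC P := by
    have exponent_le_two : 2 * (m : ℝ) / (m + 1) ≤ 2 := by
      rw [div_le_iff₀ (by positivity)]
      linarith
    have exponent_eq : 1 / (2 * (m : ℝ) / (m + 1)) - 1 / 2 = 1 / (2 * m) := by
      field_simp
      ring
    rw [← exponent_eq]
    exact lpNormC_le_choose_rpow_mul_supNormC (by positivity) exponent_le_two hP
  exact ⟨tendsto_choose_add_pred_rpow_one_div n, bound, _,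
    tendsto_choose_add_pred_rpow_one_div n, bound⟩
end

section
/- For every positive integer n, D_{ℝ,4n}(2) ≥ √(C(2n,n)) / (2√3/9)^n, where C(2n,n) is the central binomial coefficient. -/
open MvPolynomial Filter

/-- The `ℓ_p` norm of the coefficients of a real polynomial. -/
noncomputable def lpNorm {n : ℕ} (p : ℝ) (P : MvPolynomial (Fin n) ℝ) : ℝ :=
  (∑ α ∈ P.support, |coeff α P| ^ p) ^ (1 / p)

/-- The real polynomial Bohnenblust–Hille constant `D_{ℝ,m}`. -/
noncomputable def BHconst (m : ℕ) : ℝ :=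
  sInf {D : ℝ | 0 < D ∧ ∀ (n : ℕ) (P : MvPolynomial (Fin n) ℝ),
    P.IsHomogeneous m → lpNorm (2 * m / (m + 1)) P ≤ D * supNorm P}

/-- The real polynomial Bohnenblust–Hille constant `D_{ℝ,m}(n)` in a fixed number `n`
of variables. -/
noncomputable def BHconstN (m n : ℕ) : ℝ :=
  sInf {D : ℝ | 0 < D ∧ ∀ P : MvPolynomial (Fin n) ℝ,
    P.IsHomogeneous m → lpNorm (2 * m / (m + 1)) P ≤ D * supNorm P}

/-!
Let `Q = x³y - xy³`, whose sup norm on the square is at most `2√3/9`. Then `Qᵏ` is homogeneous of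
degree `4k` with sup norm at most `(2√3/9)ᵏ`, while its nonzero coefficients are, up to sign, the
binomial coefficients of order `k`, so that its `ℓ₂` coefficient norm is `√(C(2k, k))`. Since
`2m/(m+1) ≤ 2`, the `ℓ_{2m/(m+1)}` norm is at least as large, and the Bohnenblust–Hille inequality
for `Qᵏ` gives the bound.

Because `sInf ∅ = 0`, a lower bound for `BHconstN m n` also requires that some constant is
admissible. Evaluations at points of the cube separate the elements of the finite-dimensional space
of `m`-homogeneous polynomials, so they span its dual; every coefficient is thus a linear
combination of evaluations, hence bounded by a multiple of `supNorm`.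
-/

section SupNorm

variable {n : ℕ} {P : MvPolynomial (Fin n) ℝ}

lemma bddAbove_abs_eval_cube (P : MvPolynomial (Fin n) ℝ) :
    BddAbove {y : ℝ | ∃ x : Fin n → ℝ, (∀ i, |x i| ≤ 1) ∧ y = |eval x P|} := by
  refine ⟨∑ d ∈ P.support, |coeff d P|, ?_⟩
  rintro y ⟨x, hx, rfl⟩
  have abs_prod_le_one (d : Fin n →₀ ℕ) : |∏ i, x i ^ d i| ≤ 1 := by
    simp only [Finset.abs_prod, abs_pow]
    exact Finset.prod_le_one (fun i _ ↦ by positivity)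
      fun i _ ↦ pow_le_one₀ (abs_nonneg _) (hx i)
  rw [eval_eq']
  refine (Finset.abs_sum_le_sum_abs _ _).trans (Finset.sum_le_sum fun d _ ↦ ?_)
  rw [abs_mul]
  exact mul_le_of_le_one_right (abs_nonneg _) (abs_prod_le_one d)

lemma abs_eval_le_supNorm {x : Fin n → ℝ} (hx : ∀ i, |x i| ≤ 1) : |eval x P| ≤ supNorm P :=
  le_csSup (bddAbove_abs_eval_cube P) ⟨x, hx, rfl⟩

lemma supNorm_nonneg (P : MvPolynomial (Fin n) ℝ) : 0 ≤ supNorm P :=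
  (abs_nonneg _).trans (abs_eval_le_supNorm (x := 0) (by simp))

lemma supNorm_le {M : ℝ} (h : ∀ x : Fin n → ℝ, (∀ i, |x i| ≤ 1) → |eval x P| ≤ M) :
    supNorm P ≤ M := by
  refine csSup_le ⟨_, 0, by simp, rfl⟩ ?_
  rintro y ⟨x, hx, rfl⟩
  exact h x hx

lemma supNorm_pow_le (P : MvPolynomial (Fin n) ℝ) (k : ℕ) : supNorm (P ^ k) ≤ supNorm P ^ k := by
  refine supNorm_le fun x hx ↦ ?_
  rw [map_pow, abs_pow]
  exact pow_le_pow_left₀ (abs_nonneg _) (abs_eval_le_supNorm hx) k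

lemma eq_zero_of_eval_cube_eq_zero {σ : Type*} {P : MvPolynomial σ ℝ}
    (h : ∀ x : σ → ℝ, (∀ i, |x i| ≤ 1) → eval x P = 0) : P = 0 := by
  refine funext_set (fun _ ↦ Set.Icc (-1) 1) (fun _ ↦ Set.Icc_infinite (by norm_num))
    fun x hx ↦ ?_
  rw [map_zero]
  exact h x fun i ↦ abs_le.mpr (hx i trivial)

lemma exists_abs_le_mul_supNorm (V : Submodule ℝ (MvPolynomial (Fin n) ℝ)) [FiniteDimensional ℝ V]
    (f : V →ₗ[ℝ] ℝ) : ∃ B : ℝ, 0 ≤ B ∧ ∀ P : V, |f P| ≤ B * supNorm P.1 := by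
  let evalAt (x : {x : Fin n → ℝ // ∀ i, |x i| ≤ 1}) : V →ₗ[ℝ] ℝ :=
    (aeval x.1).toLinearMap ∘ₗ V.subtype
  have evalAt_apply (x) (P : V) : evalAt x P = eval x.1 P.1 := by
    simp [evalAt]
  have f_mem_span : f ∈ Submodule.span ℝ (Set.range evalAt) := by
    refine FiniteDimensional.mem_span_of_iInf_ker_le_ker fun P hP ↦ ?_
    have eval_eq_zero : ∀ x : Fin n → ℝ, (∀ i, |x i| ≤ 1) → eval x P.1 = 0 := fun x hx ↦ by
      rw [← evalAt_apply ⟨x, hx⟩]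
      exact (Submodule.mem_iInf _).mp hP ⟨x, hx⟩
    have P_eq_zero : P = 0 := Subtype.ext (eq_zero_of_eval_cube_eq_zero eval_eq_zero)
    rw [P_eq_zero]
    exact zero_mem _
  induction f_mem_span using Submodule.span_induction with
  | mem g hg =>
    obtain ⟨x, rfl⟩ := hg
    refine ⟨1, zero_le_one, fun P ↦ ?_⟩
    rw [evalAt_apply, one_mul]
    exact abs_eval_le_supNorm x.2
  | zero => exact ⟨0, le_rfl, by simp⟩
  | add g h _ _ ihg ihh =>
    obtain ⟨B, hB, hgB⟩ := ihg
    obtain ⟨C, hC, hhC⟩ := ihh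
    refine ⟨B + C, add_nonneg hB hC, fun P ↦ ?_⟩
    rw [add_mul]
    exact (abs_add_le _ _).trans (add_le_add (hgB P) (hhC P))
  | smul c g _ ih =>
    obtain ⟨B, hB, hgB⟩ := ih
    refine ⟨|c| * B, by positivity, fun P ↦ ?_⟩
    rw [LinearMap.smul_apply, smul_eq_mul, abs_mul, mul_assoc]
    exact mul_le_mul_of_nonneg_left (hgB P) (abs_nonneg c)

lemma exists_abs_coeff_le_mul_supNorm (m : ℕ) (d : Fin n →₀ ℕ) :
    ∃ B : ℝ, 0 ≤ B ∧ ∀ P : MvPolynomial (Fin n) ℝ, P.IsHomogeneous m →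
      |coeff d P| ≤ B * supNorm P := by
  let V := homogeneousSubmodule (Fin n) ℝ m
  have : FiniteDimensional ℝ V := Module.Finite.iff_fg.mpr (homogeneousSubmodule_fg _ _ m)
  obtain ⟨B, hB, hcoeff⟩ := exists_abs_le_mul_supNorm V (lcoeff ℝ d ∘ₗ V.subtype)
  exact ⟨B, hB, fun P hP ↦ hcoeff ⟨P, hP⟩⟩

end SupNorm

section LpNorm

variable {n : ℕ} {p q : ℝ}

lemma sum_rpow_rpow_le_of_exponent_le {ι : Type*} (s : Finset ι) {a : ι → ℝ} (ha : ∀ i ∈ s, 0 ≤ a i)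
    (hp : 0 < p) (hpq : p ≤ q) :
    (∑ i ∈ s, a i ^ q) ^ (1 / q) ≤ (∑ i ∈ s, a i ^ p) ^ (1 / p) := by
  have hq : 0 < q := hp.trans_le hpq
  have hsum {r : ℝ} : 0 ≤ ∑ i ∈ s, a i ^ r :=
    Finset.sum_nonneg fun i hi ↦ Real.rpow_nonneg (ha i hi) r
  set S := (∑ i ∈ s, a i ^ p) ^ (1 / p) with hS
  have S_nonneg : 0 ≤ S := Real.rpow_nonneg hsum _
  have S_rpow : S ^ p = ∑ i ∈ s, a i ^ p := by
    rw [hS, one_div, Real.rpow_inv_rpow hsum hp.ne']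
  have le_S : ∀ i ∈ s, a i ≤ S := fun i hi ↦ by
    rw [← Real.rpow_le_rpow_iff (ha i hi) S_nonneg hp, S_rpow]
    exact Finset.single_le_sum (f := fun i ↦ a i ^ p)
      (fun j hj ↦ Real.rpow_nonneg (ha j hj) p) hi
  have rpow_split {x : ℝ} (hx : 0 ≤ x) : x ^ q = x ^ p * x ^ (q - p) := by
    rw [← Real.rpow_add_of_nonneg hx hp.le (sub_nonneg.mpr hpq), add_sub_cancel]
  rw [one_div, Real.rpow_inv_le_iff_of_pos hsum S_nonneg hq]
  calc ∑ i ∈ s, a i ^ q ≤ ∑ i ∈ s, a i ^ p * S ^ (q - p) := by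
        refine Finset.sum_le_sum fun i hi ↦ ?_
        rw [rpow_split (ha i hi)]
        exact mul_le_mul_of_nonneg_left
          (Real.rpow_le_rpow (ha i hi) (le_S i hi) (sub_nonneg.mpr hpq))
          (Real.rpow_nonneg (ha i hi) p)
    _ = S ^ q := by rw [← Finset.sum_mul, ← S_rpow, ← rpow_split S_nonneg]

lemma lpNorm_le_lpNorm_of_exponent_le (P : MvPolynomial (Fin n) ℝ) (hp : 0 < p) (hpq : p ≤ q) :
    lpNorm q P ≤ lpNorm p P :=
  sum_rpow_rpow_le_of_exponent_le P.support (fun _ _ ↦ abs_nonneg _) hp hpq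

lemma lpNorm_eq_of_support_subset {P : MvPolynomial (Fin n) ℝ} {s : Finset (Fin n →₀ ℕ)}
    (hp : p ≠ 0) (hs : P.support ⊆ s) : lpNorm p P = (∑ d ∈ s, |coeff d P| ^ p) ^ (1 / p) := by
  rw [lpNorm, Finset.sum_subset hs fun d _ hd ↦ ?_]
  rw [notMem_support_iff.mp hd, abs_zero, Real.zero_rpow hp]

lemma lpNorm_sum_monomial {ι : Type*} {s : Finset ι} {e : ι → Fin n →₀ ℕ} (he : Set.InjOn e s)
    (c : ι → ℝ) (hp : p ≠ 0) :
    lpNorm p (∑ i ∈ s, monomial (e i) (c i)) = (∑ i ∈ s, |c i| ^ p) ^ (1 / p) := by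
  classical
  have support_subset : (∑ i ∈ s, monomial (e i) (c i)).support ⊆ s.image e := by
    refine support_sum.trans (Finset.biUnion_subset.mpr fun i hi ↦ ?_)
    exact support_monomial_subset.trans
      (Finset.singleton_subset_iff.mpr (Finset.mem_image_of_mem e hi))
  have coeff_eq : ∀ i ∈ s, coeff (e i) (∑ j ∈ s, monomial (e j) (c j)) = c i := fun i hi ↦ by
    rw [coeff_sum, Finset.sum_eq_single_of_mem i hi fun j hj hji ↦ ?_, coeff_monomial, if_pos rfl]
    rw [coeff_monomial, if_neg (he.ne hj hi hji)]
  rw [lpNorm_eq_of_support_subset hp support_subset, Finset.sum_image he]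
  exact congrArg (· ^ (1 / p)) (Finset.sum_congr rfl fun i hi ↦ by rw [coeff_eq i hi])

lemma injOn_nsmul_add_nsmul {σ : Type*} {a b : σ →₀ ℕ} (hab : a ≠ b) (k : ℕ) :
    Set.InjOn (fun j ↦ j • a + (k - j) • b) (Finset.range (k + 1)) := by
  obtain ⟨i, hi⟩ := DFunLike.ne_iff.mp hab
  intro j hj l hl h
  simp only [Finset.coe_range, Set.mem_Iio, Nat.lt_succ_iff] at hj hl
  have coord_eq := DFunLike.congr_fun h i
  simp only [Finsupp.add_apply, Finsupp.smul_apply, smul_eq_mul] at coord_eq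
  zify [hj, hl] at coord_eq hi ⊢
  have factored : ((j : ℤ) - l) * (a i - b i) = 0 := by linear_combination coord_eq
  exact sub_eq_zero.mp ((mul_eq_zero.mp factored).resolve_right (sub_ne_zero.mpr hi))

lemma lpNorm_monomial_sub_monomial_pow {a b : Fin n →₀ ℕ} (hab : a ≠ b) (k : ℕ) (hp : p ≠ 0) :
    lpNorm p ((monomial a 1 - monomial b 1) ^ k) =
      (∑ j ∈ Finset.range (k + 1), (k.choose j : ℝ) ^ p) ^ (1 / p) := by
  have expansion : (monomial a 1 - monomial b 1 : MvPolynomial (Fin n) ℝ) ^ k =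
      ∑ j ∈ Finset.range (k + 1),
        monomial (j • a + (k - j) • b) ((-1) ^ (k - j) * (k.choose j : ℝ)) := by
    rw [sub_eq_add_neg, add_pow]
    refine Finset.sum_congr rfl fun j _ ↦ ?_
    rw [← map_neg, monomial_pow, monomial_pow, monomial_mul, ← C_eq_coe_nat, mul_comm _ (C _),
      C_mul_monomial, one_pow, one_mul, mul_comm]
  rw [expansion, lpNorm_sum_monomial (injOn_nsmul_add_nsmul hab k) _ hp]
  simp only [abs_mul, abs_pow, abs_neg, abs_one, one_pow, one_mul, Nat.abs_cast]

lemma lpNorm_two_monomial_sub_monomial_pow {a b : Fin n →₀ ℕ} (hab : a ≠ b) (k : ℕ) :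
    lpNorm 2 ((monomial a 1 - monomial b 1) ^ k) = √((2 * k).choose k) := by
  rw [lpNorm_monomial_sub_monomial_pow hab k two_ne_zero, ← Real.sqrt_eq_rpow,
    ← Nat.sum_range_choose_sq]
  push_cast
  simp only [Real.rpow_two]

end LpNorm

section BohnenblustHille

lemma exists_lpNorm_le_mul_supNorm (m n : ℕ) {p : ℝ} (hp : 0 < p) :
    ∃ D : ℝ, 0 < D ∧ ∀ P : MvPolynomial (Fin n) ℝ, P.IsHomogeneous m →
      lpNorm p P ≤ D * supNorm P := by
  choose B hB hcoeff using exists_abs_coeff_le_mul_supNorm (n := n) m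
  let s : Finset (Fin n →₀ ℕ) := (Finsupp.finite_of_degree_eq m).toFinset
  have hsum : 0 ≤ ∑ d ∈ s, B d ^ p := Finset.sum_nonneg fun d _ ↦ Real.rpow_nonneg (hB d) p
  refine ⟨(∑ d ∈ s, B d ^ p) ^ (1 / p) + 1, by positivity, fun P hP ↦ ?_⟩
  have support_subset : P.support ⊆ s := fun d hd ↦ by
    rw [Set.Finite.mem_toFinset, Set.mem_ofPred_eq, Finsupp.degree_eq_weight_one]
    exact hP (mem_support_iff.mp hd)
  have hP0 := supNorm_nonneg P
  calc lpNorm p P = (∑ d ∈ s, |coeff d P| ^ p) ^ (1 / p) :=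
        lpNorm_eq_of_support_subset hp.ne' support_subset
    _ ≤ (∑ d ∈ s, (B d * supNorm P) ^ p) ^ (1 / p) := by
        gcongr with d
        exact hcoeff d P hP
    _ = (∑ d ∈ s, B d ^ p) ^ (1 / p) * supNorm P := by
        simp only [Real.mul_rpow (hB _) hP0]
        rw [← Finset.sum_mul, Real.mul_rpow hsum (by positivity), one_div,
          Real.rpow_rpow_inv hP0 hp.ne']
    _ ≤ ((∑ d ∈ s, B d ^ p) ^ (1 / p) + 1) * supNorm P := by
        gcongr
        exact le_add_of_nonneg_right zero_le_one

lemma BHconstN_nonneg (m n : ℕ) : 0 ≤ BHconstN m n :=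
  Real.sInf_nonneg fun _ hD ↦ hD.1.le

lemma lpNorm_le_BHconstN_mul_supNorm {m n : ℕ} (hm : 0 < m) {P : MvPolynomial (Fin n) ℝ}
    (hP : P.IsHomogeneous m) :
    lpNorm (2 * m / (m + 1)) P ≤ BHconstN m n * supNorm P := by
  obtain ⟨D, hD, hDP⟩ := exists_lpNorm_le_mul_supNorm m n (p := 2 * m / (m + 1)) (by positivity)
  rcases (supNorm_nonneg P).eq_or_lt' with hP0 | hP0
  · simpa only [hP0, mul_zero] using hDP P hP
  · rw [← div_le_iff₀ hP0]
    exact le_csInf ⟨D, hD, hDP⟩ fun E hE ↦ (div_le_iff₀ hP0).mpr (hE.2 P hP)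

end BohnenblustHille

section Quartic

/-- The quartic form `x³y - xy³`, denoted `P₄` in the paper. -/
noncomputable def quartic : MvPolynomial (Fin 2) ℝ := X 0 ^ 3 * X 1 - X 0 * X 1 ^ 3

lemma isHomogeneous_quartic : quartic.IsHomogeneous 4 :=
  ((isHomogeneous_X_pow 0 3).mul (isHomogeneous_X ℝ 1)).sub
    ((isHomogeneous_X ℝ 0).mul (isHomogeneous_X_pow 1 3))

lemma mul_mul_sub_sq_le {a b : ℝ} (ha : a ∈ Set.Icc 0 1) (hb : b ∈ Set.Icc 0 1) :
    a * b * (a - b) ^ 2 ≤ 4 / 27 := by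
  wlog hba : b ≤ a generalizing a b
  · calc a * b * (a - b) ^ 2 = b * a * (b - a) ^ 2 := by ring
      _ ≤ 4 / 27 := this hb ha (le_of_not_ge hba)
  -- For fixed `a` the left side is maximal at `b = a / 3`.
  have cubic_le : b * (a - b) ^ 2 ≤ 4 / 27 * a ^ 3 := by
    have factored_nonneg : 0 ≤ (a - 3 * b) ^ 2 * (4 * a - 3 * b) :=
      mul_nonneg (sq_nonneg _) (by linarith [ha.1])
    linarith
  calc a * b * (a - b) ^ 2 = a * (b * (a - b) ^ 2) := by ring
    _ ≤ a * (4 / 27 * a ^ 3) := mul_le_mul_of_nonneg_left cubic_le ha.1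
    _ = 4 / 27 * a ^ 4 := by ring
    _ ≤ 4 / 27 := mul_le_of_le_one_right (by norm_num) (pow_le_one₀ ha.1 ha.2)

lemma supNorm_quartic_le : supNorm quartic ≤ 2 * √3 / 9 := by
  refine supNorm_le fun x hx ↦ abs_le_of_sq_le_sq ?_ (by positivity)
  have sq_mem (i : Fin 2) : x i ^ 2 ∈ Set.Icc 0 1 :=
    ⟨sq_nonneg _, (sq_le_one_iff_abs_le_one _).mpr (hx i)⟩
  calc (eval x quartic) ^ 2 = x 0 ^ 2 * x 1 ^ 2 * (x 0 ^ 2 - x 1 ^ 2) ^ 2 := by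
        simp only [quartic, map_sub, map_mul, map_pow, eval_X]
        ring
    _ ≤ 4 / 27 := mul_mul_sub_sq_le (sq_mem 0) (sq_mem 1)
    _ = (2 * √3 / 9) ^ 2 := by
        rw [div_pow, mul_pow, Real.sq_sqrt (by norm_num)]
        norm_num

lemma lpNorm_two_quartic_pow (k : ℕ) : lpNorm 2 (quartic ^ k) = √((2 * k).choose k) := by
  let a : Fin 2 →₀ ℕ := Finsupp.single 0 3 + Finsupp.single 1 1
  let b : Fin 2 →₀ ℕ := Finsupp.single 0 1 + Finsupp.single 1 3
  have hab : a ≠ b := fun h ↦ by simpa [a, b] using DFunLike.congr_fun h 0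
  have quartic_eq : quartic = monomial a 1 - monomial b 1 := by
    simp only [quartic, a, b, X, monomial_pow, monomial_mul, Finsupp.smul_single, smul_eq_mul,
      mul_one, one_pow]
  rw [quartic_eq, lpNorm_two_monomial_sub_monomial_pow hab]

end Quartic

/-- For every positive integer `n`, `D_{ℝ,4n}(2) ≥ √(C(2n,n)) / (2√3/9)^n`. -/
theorem real_BH_lower_two_vars (n : ℕ) (hn : 0 < n) :
    Real.sqrt (Nat.choose (2 * n) n) / (2 * Real.sqrt 3 / 9) ^ n ≤ BHconstN (4 * n) 2 := by
  have exponent_pos : (0 : ℝ) < 2 * (4 * n : ℕ) / ((4 * n : ℕ) + 1) := by positivity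
  have exponent_le_two : (2 * (4 * n : ℕ) / ((4 * n : ℕ) + 1) : ℝ) ≤ 2 := by
    rw [div_le_iff₀ (by positivity)]
    linarith
  rw [div_le_iff₀ (by positivity)]
  calc √((2 * n).choose n) = lpNorm 2 (quartic ^ n) := (lpNorm_two_quartic_pow n).symm
    _ ≤ lpNorm (2 * (4 * n : ℕ) / ((4 * n : ℕ) + 1)) (quartic ^ n) :=
        lpNorm_le_lpNorm_of_exponent_le _ exponent_pos exponent_le_two
    _ ≤ BHconstN (4 * n) 2 * supNorm (quartic ^ n) :=
        lpNorm_le_BHconstN_mul_supNorm (by positivity) (isHomogeneous_quartic.pow n)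
    _ ≤ BHconstN (4 * n) 2 * (2 * √3 / 9) ^ n := by
        refine mul_le_mul_of_nonneg_left ?_ (BHconstN_nonneg _ _)
        exact (supNorm_pow_le quartic n).trans
          (pow_le_pow_left₀ (supNorm_nonneg _) supNorm_quartic_le n)
end
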